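/- Let AW_{m|n}(a) denote the set of all typical antidominant gl(m|n)-weights λ such that λ_i − (−1)^{|i|}a ∉ ℤ for all i ∈ I. If λ ∈ AW_{m|n}(a), then F_a ⊗ M(λ), considered as a gl(m+1|n)-representation via φ_R, is isomorphic to the Verma module M(λ̃). -/

import Mathlib

set_option maxHeartbeats 1000000
set_option synthInstance.maxHeartbeats 400000

noncomputable section
open scoped TensorProduct

/-- The index set `I = {1,…,m,1̄,…,n̄}` of `gl(m|n)`; `Sum.inl` are the even
(unbarred) indices, `Sum.inr` the odd (barred) ones.  The index set
`Î = {0} ∪ I` of `gl(m+1|n)` is realized as `Ind (m+1) n`, with `0 = Sum.inl 0`. -/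
abbrev Ind (m n : ℕ) := Fin m ⊕ Fin n

/-- Parity of an index, as `0` or `1`. -/
def pI {m n : ℕ} : Ind m n → ℕ := Sum.elim (fun _ => 0) (fun _ => 1)

/-- The total order `1 < ⋯ < m < 1̄ < ⋯ < n̄` on `I` (and, with `m+1` in place of `m`,
the order `0 < 1 < ⋯ < m < 1̄ < ⋯ < n̄` on `Î`). -/
def iltI {m n : ℕ} : Ind m n → Ind m n → Prop
  | Sum.inl a, Sum.inl b => a < b
  | Sum.inl _, Sum.inr _ => True
  | Sum.inr _, Sum.inl _ => False
  | Sum.inr a, Sum.inr b => a < b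

/-- The distinguished index `0` of `Î`. -/
def z0 {m n : ℕ} : Ind (m+1) n := Sum.inl 0

/-- The inclusion `I ↪ Î`. -/
def emb {m n : ℕ} : Ind m n → Ind (m+1) n := Sum.map Fin.succ id

lemma emb_injective {m n : ℕ} : Function.Injective (emb (m := m) (n := n)) := by
  intro a b h
  cases a <;> cases b <;> simp [emb, Fin.succ_inj] at h <;> simp [h]

lemma emb_ne_z0 {m n : ℕ} (a : Ind m n) : emb a ≠ z0 := by
  cases a <;> simp [emb, z0, Fin.succ_ne_zero]

/-- Builds a linear map out of a space with basis `α` from a function on basis vectors. -/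
def mkOp {α M : Type} [AddCommGroup M] [Module ℂ M] (g : α → M) : (α →₀ ℂ) →ₗ[ℂ] M :=
  Finsupp.lsum ℂ fun x => LinearMap.toSpanSingleton ℂ M (g x)

/-- Number of odd variables occurring before position `i`. -/
def cntB {n : ℕ} (b : Fin n → Bool) (i : Fin n) : ℕ :=
  (Finset.univ.filter fun j => j < i ∧ b j = true).card

/-- Number of odd variables occurring. -/
def cntA {n : ℕ} (b : Fin n → Bool) : ℕ := (Finset.univ.filter fun j => b j = true).card


/-- The defining (super-)commutation relations of `gl`:
`e_ij e_kl − (−1)^{(|i|+|j|)(|k|+|l|)} e_kl e_ij = δ_jk e_il − (−1)^{(|i|+|j|)(|k|+|l|)} δ_li e_kj`. -/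
inductive glRel (ι : Type) (p : ι → ℕ) [DecidableEq ι] :
    FreeAlgebra ℂ (ι × ι) → FreeAlgebra ℂ (ι × ι) → Prop
  | basic (i j k l : ι) : glRel ι p
      (FreeAlgebra.ι ℂ (i, j) * FreeAlgebra.ι ℂ (k, l)
        - ((-1 : ℂ) ^ ((p i + p j) * (p k + p l))) •
            (FreeAlgebra.ι ℂ (k, l) * FreeAlgebra.ι ℂ (i, j)))
      ((if j = k then FreeAlgebra.ι ℂ (i, l) else 0)
        - ((-1 : ℂ) ^ ((p i + p j) * (p k + p l))) •
            (if l = i then FreeAlgebra.ι ℂ (k, j) else 0))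

/-- The universal enveloping superalgebra of the general linear Lie superalgebra with
index set `ι` and parity `p`, presented by generators `e_ij` and the super-commutator
relations. -/
abbrev UEA (ι : Type) (p : ι → ℕ) [DecidableEq ι] : Type := RingQuot (glRel ι p)

/-- The generator `e_ij` of `UEA ι p`. -/
def gen {ι : Type} (p : ι → ℕ) [DecidableEq ι] (i j : ι) : UEA ι p :=
  RingQuot.mkAlgHom ℂ (glRel ι p) (FreeAlgebra.ι ℂ (i, j))

/-- Monomials of the `D'(m|n)`-module `F_a`: such a monomial
`t_0^{a−k_1−⋯−k_{n̄}} t_1^{k_1}⋯t_m^{k_m} t_{1̄}^{k_{1̄}}⋯t_{n̄}^{k_{n̄}}` is determined by the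
exponents `(k_1,…,k_m,k_{1̄},…,k_{n̄})`. -/
abbrev FaMon (m n : ℕ) := (Fin m → ℕ) × (Fin n → Bool)

/-- The module `F_a`, as the vector space with basis its monomials. -/
abbrev FaSp (m n : ℕ) : Type := FaMon m n →₀ ℂ

/-- A basis monomial of `F_a`. -/
def amono {m n : ℕ} (x : FaMon m n) : FaSp m n := Finsupp.single x 1

/-- The parity of a monomial of `F_a`. -/
def parM {m n : ℕ} (x : FaMon m n) : ℕ := cntA x.2

/-- The monomial `t_0^a` of `F_a`. -/
def hwMon (m n : ℕ) : FaMon m n := (fun _ => 0, fun _ => false)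

/-- Multiplication by `t_i/t_0` on `F_a`, even `i`. -/
def aDivE {m n : ℕ} (i : Fin m) : Module.End ℂ (FaSp m n) :=
  mkOp fun x => amono (Function.update x.1 i (x.1 i + 1), x.2)

/-- Multiplication by `t_ī/t_0` on `F_a`, odd `ī`. -/
def aDivO {m n : ℕ} (i : Fin n) : Module.End ℂ (FaSp m n) :=
  mkOp fun x => if x.2 i then 0 else
    ((-1 : ℂ) ^ (cntB x.2 i)) • amono (x.1, Function.update x.2 i true)

/-- The operator `t_0∂_0` on `F_a` (the exponent of `t_0` is `a` minus the total degree of the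
other variables). -/
def aPar0 {m n : ℕ} (a : ℂ) : Module.End ℂ (FaSp m n) :=
  mkOp fun x => (a - (∑ i, (x.1 i : ℂ)) - (cntA x.2 : ℂ)) • amono x

/-- The operator `t_0∂_i` on `F_a`, even `i`. -/
def aParE {m n : ℕ} (i : Fin m) : Module.End ℂ (FaSp m n) :=
  mkOp fun x => (x.1 i : ℂ) • amono (Function.update x.1 i (x.1 i - 1), x.2)

/-- The operator `t_0∂_ī` on `F_a`, odd `ī`. -/
def aParO {m n : ℕ} (i : Fin n) : Module.End ℂ (FaSp m n) :=
  mkOp fun x => if x.2 i then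
    ((-1 : ℂ) ^ (cntB x.2 i)) • amono (x.1, Function.update x.2 i false) else 0

/-- `t_i/t_0` on `F_a` for `i ∈ I`. -/
def aDiv {m n : ℕ} : Ind m n → Module.End ℂ (FaSp m n) := Sum.elim aDivE aDivO

/-- `t_0∂_i` on `F_a` for `i ∈ Î`. -/
def aParB {m n : ℕ} (a : ℂ) : Ind (m+1) n → Module.End ℂ (FaSp m n) :=
  Sum.elim (Fin.cases (aPar0 a) aParE) aParO

/-- `t_i/t_0` on `F_a` for `i ∈ Î`. -/
def aDivB {m n : ℕ} : Ind (m+1) n → Module.End ℂ (FaSp m n) :=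
  Sum.elim (Fin.cases 1 aDivE) aDivO

/-- The operator `t_i∂_j` on `F_a`, `i, j ∈ Î`. -/
def aTD {m n : ℕ} (a : ℂ) (i j : Ind (m+1) n) : Module.End ℂ (FaSp m n) :=
  aDivB i * aParB a j

/-- The simple highest weight module `L(λ)` over `U(gl(m|n))`: a simple module with a
(nonzero) highest weight vector of weight `λ`. -/
structure SimpleHW (m n : ℕ) (lam : Ind m n → ℂ) where
  L : Type
  [acg : AddCommGroup L]
  [mod : Module ℂ L]
  ρ : UEA (Ind m n) pI →ₐ[ℂ] Module.End ℂ L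
  v : L
  v_ne : v ≠ 0
  hw : ∀ i j : Ind m n, iltI i j → ρ (gen pI i j) v = 0
  hwt : ∀ i : Ind m n, ρ (gen pI i i) v = lam i • v
  simple : ∀ N : Submodule ℂ L, (∀ u x, x ∈ N → ρ u x ∈ N) → N = ⊥ ∨ N = ⊤

attribute [instance] SimpleHW.acg SimpleHW.mod

/-- The Verma module `M(λ)` over `U(gl(m|n))`: a module generated by a highest weight vector
of weight `λ` which is universal among such. -/
structure VermaM (m n : ℕ) (lam : Ind m n → ℂ) where
  L : Type
  [acg : AddCommGroup L]
  [mod : Module ℂ L]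
  ρ : UEA (Ind m n) pI →ₐ[ℂ] Module.End ℂ L
  v : L
  v_ne : v ≠ 0
  hw : ∀ i j : Ind m n, iltI i j → ρ (gen pI i j) v = 0
  hwt : ∀ i : Ind m n, ρ (gen pI i i) v = lam i • v
  gens : ∀ N : Submodule ℂ L, (∀ u x, x ∈ N → ρ u x ∈ N) → v ∈ N → N = ⊤
  univ : ∀ (W : Type) [AddCommGroup W] [Module ℂ W]
      (ρW : UEA (Ind m n) pI →ₐ[ℂ] Module.End ℂ W) (w : W),
      (∀ i j : Ind m n, iltI i j → ρW (gen pI i j) w = 0) →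
      (∀ i : Ind m n, ρW (gen pI i i) w = lam i • w) →
      ∃ g : L →ₗ[ℂ] W, g v = w ∧ ∀ u x, g (ρ u x) = ρW u (g x)

attribute [instance] VermaM.acg VermaM.mod

/-- The predicate expressing that `Θ` is the representation of `U(gl(m+1|n))` on
`F_a ⊗ L` obtained via `φ_R` from a representation `ρ` of `U(gl(m|n))` on `L`, where the
central element `R` acts by the scalar `r`; the formulas for the action of the generators on
pure tensors (with the appropriate Koszul signs) are written out explicitly. -/
def IsTensorRep {m n : ℕ} (a r : ℂ) {L : Type} [AddCommGroup L] [Module ℂ L]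
    (ρ : UEA (Ind m n) pI →ₐ[ℂ] Module.End ℂ L)
    (Θ : UEA (Ind (m+1) n) pI →ₐ[ℂ] Module.End ℂ (FaSp m n ⊗[ℂ] L)) : Prop :=
  (∀ (c d : Ind m n) (x : FaMon m n) (v : L),
    Θ (gen pI (emb c) (emb d)) (amono x ⊗ₜ[ℂ] v) =
      (aTD a (emb c) (emb d)) (amono x) ⊗ₜ[ℂ] v
      + ((-1 : ℂ) ^ ((pI c + pI d) * parM x)) • (amono x ⊗ₜ[ℂ] (ρ (gen pI c d) v))
      + (if c = d then (((-1 : ℂ) ^ (pI c * pI d)) * r) • (amono x ⊗ₜ[ℂ] v) else 0)) ∧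
  (∀ (c : Ind m n) (x : FaMon m n) (v : L),
    Θ (gen pI (emb c) z0) (amono x ⊗ₜ[ℂ] v) =
      (aTD a (emb c) z0) (amono x) ⊗ₜ[ℂ] v
      - ∑ j : Ind m n, (((-1 : ℂ) ^ (pI c * pI j)) * ((-1 : ℂ) ^ ((pI c + pI j) * parM x))) •
          ((aDiv j (amono x)) ⊗ₜ[ℂ] (ρ (gen pI c j) v))) ∧
  (∀ (d : Ind m n) (x : FaMon m n) (v : L),
    Θ (gen pI z0 (emb d)) (amono x ⊗ₜ[ℂ] v) = (aTD a z0 (emb d)) (amono x) ⊗ₜ[ℂ] v) ∧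
  (∀ (x : FaMon m n) (v : L),
    Θ (gen pI z0 z0) (amono x ⊗ₜ[ℂ] v) =
      (aTD a z0 z0) (amono x) ⊗ₜ[ℂ] v + r • (amono x ⊗ₜ[ℂ] v))

/-- The shifted weight `λ̃ = (a+r, λ_1+r, …, λ_m+r, λ_{1̄}−r, …, λ_{n̄}−r)`. -/
def lamTilde {m n : ℕ} (a r : ℂ) (lam : Ind m n → ℂ) : Ind (m+1) n → ℂ :=
  Sum.elim (Fin.cases (a + r) fun k => lam (Sum.inl k) + r) fun k => lam (Sum.inr k) - r

/-- The Weyl vector `ρ_{m|n} = (m, m−1, …, 1, −1, −2, …, −n)`. -/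
def rhoS {m n : ℕ} : Ind m n → ℂ := Sum.elim (fun k => (m : ℂ) - k) fun k => -(k : ℂ) - 1

/-- Antidominance of a weight of `gl(m|n)`:
`⟨λ+ρ, α^∨⟩ ∉ ℤ_{>0}` for all positive even roots `α`. -/
def Antidom {m n : ℕ} (lam : Ind m n → ℂ) : Prop :=
  (∀ i j : Fin m, i < j → ¬∃ N : ℕ,
    (lam (Sum.inl i) + rhoS (m:=m) (n:=n) (Sum.inl i)) - (lam (Sum.inl j) + rhoS (m:=m) (n:=n) (Sum.inl j)) = (N : ℂ) + 1) ∧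
  (∀ i j : Fin n, i < j → ¬∃ N : ℕ,
    (lam (Sum.inr i) + rhoS (m:=m) (n:=n) (Sum.inr i)) - (lam (Sum.inr j) + rhoS (m:=m) (n:=n) (Sum.inr j)) = (N : ℂ) + 1)

/-- Typicality of a weight of `gl(m|n)`:
`(λ+ρ, α) ≠ 0` for all positive odd isotropic roots `α = δ_i − ε_j`. -/
def Typical {m n : ℕ} (lam : Ind m n → ℂ) : Prop :=
  ∀ (i : Fin m) (j : Fin n),
    (lam (Sum.inl i) + rhoS (m:=m) (n:=n) (Sum.inl i)) + (lam (Sum.inr j) + rhoS (m:=m) (n:=n) (Sum.inr j)) ≠ 0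

section aux

variable {ι : Type} {p : ι → ℕ} [DecidableEq ι]

lemma gen_rel (i j k l : ι) : gen p i j * gen p k l =
    ((-1 : ℂ) ^ ((p i + p j) * (p k + p l))) • (gen p k l * gen p i j) +
    ((if j = k then gen p i l else 0)
        - ((-1 : ℂ) ^ ((p i + p j) * (p k + p l))) • (if l = i then gen p k j else 0)) := by
  have h := RingQuot.mkAlgHom_rel ℂ (glRel.basic (p := p) i j k l)
  simp only [map_sub, map_mul, map_smul] at h
  rw [sub_eq_iff_eq_add'] at h
  unfold gen
  rw [h]
  congr 2
  · split_ifs <;> simp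
  · split_ifs <;> simp

lemma stable_of_gen {L : Type} [AddCommGroup L] [Module ℂ L]
    (ρ : UEA ι p →ₐ[ℂ] Module.End ℂ L) (N : Submodule ℂ L)
    (h : ∀ i j x, x ∈ N → ρ (gen p i j) x ∈ N) : ∀ u x, x ∈ N → ρ u x ∈ N := by
  intro u
  obtain ⟨u, rfl⟩ := RingQuot.mkAlgHom_surjective ℂ (glRel ι p) u
  induction u using FreeAlgebra.induction with
  | grade0 c =>
    intro x hx
    simp only [AlgHom.commutes, Module.algebraMap_end_apply]
    exact N.smul_mem _ hx
  | grade1 c => intro x hx; exact h c.1 c.2 x hx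
  | mul a b ha hb =>
    intro x hx
    simp only [map_mul, Module.End.mul_apply]
    exact ha _ (hb _ hx)
  | add a b ha hb =>
    intro x hx
    simp only [map_add, LinearMap.add_apply]
    exact N.add_mem (ha _ hx) (hb _ hx)

lemma rep_rel {L : Type} [AddCommGroup L] [Module ℂ L]
    (ρ : UEA ι p →ₐ[ℂ] Module.End ℂ L) (i j k l : ι) (x : L) :
    ρ (gen p i j) (ρ (gen p k l) x) =
    ((-1 : ℂ) ^ ((p i + p j) * (p k + p l))) • ρ (gen p k l) (ρ (gen p i j) x) +
    ((if j = k then ρ (gen p i l) x else 0)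
        - ((-1 : ℂ) ^ ((p i + p j) * (p k + p l))) • (if l = i then ρ (gen p k j) x else 0)) := by
  rw [← Module.End.mul_apply, ← map_mul, gen_rel]
  simp only [map_add, map_sub, map_smul, map_mul, LinearMap.add_apply, LinearMap.sub_apply,
    LinearMap.smul_apply, Module.End.mul_apply]
  congr 2
  · split_ifs <;> simp
  · split_ifs <;> simp

/-- word of generators acting on a vector -/
def wordAct {L : Type} [AddCommGroup L] [Module ℂ L]
    (ρ : UEA ι p →ₐ[ℂ] Module.End ℂ L) (S : Set (ι × ι)) (l : List S) (b : L) : L :=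
  l.foldr (fun s y => ρ (gen p s.1.1 s.1.2) y) b

/-- span of words -/
def wordSpan {L : Type} [AddCommGroup L] [Module ℂ L]
    (ρ : UEA ι p →ₐ[ℂ] Module.End ℂ L) (S : Set (ι × ι)) (B : Set L) : Submodule ℂ L :=
  Submodule.span ℂ {y | ∃ (l : List S) (b : L), b ∈ B ∧ y = wordAct ρ S l b}

lemma wordSpan_le {L : Type} [AddCommGroup L] [Module ℂ L]
    (ρ : UEA ι p →ₐ[ℂ] Module.End ℂ L) (S : Set (ι × ι)) (B : Set L) (Q : Submodule ℂ L)
    (hB : B ⊆ Q) (hS : ∀ s ∈ S, ∀ x ∈ Q, ρ (gen p s.1 s.2) x ∈ Q) : wordSpan ρ S B ≤ Q := by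
  refine Submodule.span_le.2 ?_
  rintro _ ⟨l, b, hb, rfl⟩
  induction l with
  | nil => exact hB hb
  | cons s l ih => exact hS _ s.2 _ ih

lemma wordSpan_letter {L : Type} [AddCommGroup L] [Module ℂ L]
    (ρ : UEA ι p →ₐ[ℂ] Module.End ℂ L) (S : Set (ι × ι)) (B : Set L) :
    ∀ s ∈ S, ∀ x ∈ wordSpan ρ S B, ρ (gen p s.1 s.2) x ∈ wordSpan ρ S B := by
  intro s hs x hx
  have : wordSpan ρ S B ≤ (wordSpan ρ S B).comap (ρ (gen p s.1 s.2)) := by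
    refine Submodule.span_le.2 ?_
    rintro _ ⟨l, b, hb, rfl⟩
    exact Submodule.subset_span ⟨⟨s, hs⟩ :: l, b, hb, rfl⟩
  exact this hx

lemma wordSpan_base {L : Type} [AddCommGroup L] [Module ℂ L]
    (ρ : UEA ι p →ₐ[ℂ] Module.End ℂ L) (S : Set (ι × ι)) (B : Set L) :
    B ⊆ wordSpan ρ S B := fun b hb => Submodule.subset_span ⟨[], b, hb, rfl⟩

lemma wordSpan_stable {L : Type} [AddCommGroup L] [Module ℂ L]
    (ρ : UEA ι p →ₐ[ℂ] Module.End ℂ L) (S : Set (ι × ι)) (B : Set L)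
    (h : ∀ i j, ∀ b ∈ B, ρ (gen p i j) b ∈ wordSpan ρ S B) :
    ∀ u x, x ∈ wordSpan ρ S B → ρ u x ∈ wordSpan ρ S B := by
  refine stable_of_gen ρ _ ?_
  have key : ∀ (l : List S) (b : L), b ∈ B → ∀ i j,
      ρ (gen p i j) (wordAct ρ S l b) ∈ wordSpan ρ S B := by
    intro l b hb
    induction l with
    | nil => intro i j; exact h i j b hb
    | cons s l ih =>
      intro i j
      change ρ (gen p i j) (ρ (gen p s.1.1 s.1.2) (wordAct ρ S l b)) ∈ _
      rw [rep_rel]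
      refine Submodule.add_mem _ (Submodule.smul_mem _ _ (wordSpan_letter _ _ _ _ s.2 _ (ih _ _)))
        (Submodule.sub_mem _ ?_ (Submodule.smul_mem _ _ ?_))
      · split_ifs
        · exact ih _ _
        · exact Submodule.zero_mem _
      · split_ifs
        · exact ih _ _
        · exact Submodule.zero_mem _
  intro i j x hx
  have : wordSpan ρ S B ≤ (wordSpan ρ S B).comap (ρ (gen p i j)) := by
    refine Submodule.span_le.2 ?_
    rintro _ ⟨l, b, hb, rfl⟩
    exact key l b hb i j
  exact this hx

/-- Hopfian lemma: graded with finite-dimensional pieces. -/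
lemma inj_of_surj_graded {X κ : Type} [AddCommGroup X] [Module ℂ X] (T Φ : Module.End ℂ X)
    (b : κ → X) (hb : Submodule.span ℂ (Set.range b) = ⊤) (N : κ → ℕ) (c : ℂ)
    (hT : ∀ i, T (b i) = (c - N i) • b i) (hΦ : ∀ i, T (Φ (b i)) = (c - N i) • Φ (b i))
    (hfin : ∀ k, {i | N i = k}.Finite) (hs : Function.Surjective Φ) : Function.Injective Φ := by
  classical
  set S : ℕ → Submodule ℂ X := fun k => Submodule.span ℂ (b '' {i | N i = k}) with hS
  have hcomm : ∀ x, T (Φ x) = Φ (T x) := by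
    intro x
    have : x ∈ Submodule.span ℂ (Set.range b) := hb ▸ Submodule.mem_top
    induction this using Submodule.span_induction with
    | mem x h => obtain ⟨i, rfl⟩ := h; rw [hΦ, hT, map_smul]
    | zero => simp
    | add x y _ _ hx hy => simp [hx, hy]
    | smul r x _ hx => simp [hx]
  have hSe : ∀ k, S k ≤ T.eigenspace (c - k) := by
    intro k
    refine Submodule.span_le.2 ?_
    rintro _ ⟨i, rfl, rfl⟩
    exact Module.End.mem_eigenspace_iff.2 (hT i)
  have hinj : Function.Injective (fun k : ℕ => c - (k : ℂ)) := by
    intro x y h; simpa using h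
  have hind : iSupIndep (fun k : ℕ => T.eigenspace (c - k)) :=
    (Module.End.eigenspaces_iSupIndep T).comp hinj
  have hindS : iSupIndep S := hind.mono hSe
  have htop : iSup S = ⊤ := by
    rw [eq_top_iff, ← hb, Submodule.span_le]
    rintro _ ⟨i, rfl⟩
    exact Submodule.mem_iSup_of_mem (N i) (Submodule.subset_span ⟨i, rfl, rfl⟩)
  have hint : DirectSum.IsInternal S :=
    DirectSum.isInternal_submodule_of_iSupIndep_of_iSup_eq_top hindS htop
  have hfd : ∀ k, FiniteDimensional ℂ (S k) := fun k =>
    FiniteDimensional.span_of_finite ℂ ((hfin k).image b)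
  -- sums of eigenvectors
  have hdec : ∀ x : X, ∃ (s : Finset ℕ) (y : ℕ → X), (∀ k, y k ∈ S k) ∧ (∀ k, k ∉ s → y k = 0) ∧
      ∑ k ∈ s, y k = x := by
    intro x
    have : x ∈ iSup S := htop ▸ Submodule.mem_top
    obtain ⟨y, hy⟩ := (Submodule.mem_iSup_iff_exists_dfinsupp _ _).1 this
    refine ⟨y.support, fun k => y k, fun k => (y k).2, fun k hk => by simpa using hk, ?_⟩
    rw [← hy]
    simp [DFinsupp.lsum_apply_apply, DFinsupp.sumAddHom_apply, DFinsupp.sum]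
  have hzero : ∀ (s : Finset ℕ) (y : ℕ → X), (∀ k : ℕ, y k ∈ T.eigenspace (c - k)) →
      ∑ k ∈ s, y k = 0 → ∀ k ∈ s, y k = 0 := by
    intro s y hy h0
    exact (iSupIndep_iff_finsetSum_eq_zero_imp_eq_zero _).1 hind s y (fun k _ => hy k) h0
  have hmapE : ∀ (k : ℕ) x, x ∈ T.eigenspace (c - k) → Φ x ∈ T.eigenspace (c - k) := by
    intro k x hx
    rw [Module.End.mem_eigenspace_iff] at hx ⊢
    rw [hcomm, hx, map_smul]
  have hpick : ∀ (s : Finset ℕ) (y : ℕ → X), (∀ k : ℕ, y k ∈ T.eigenspace (c - k)) →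
      (∀ k, k ∉ s → y k = 0) → ∀ (k : ℕ) z, z ∈ T.eigenspace (c - k) →
      ∑ j ∈ s, y j = z → y k = z := by
    intro s y hy hys k z hz hsum
    have h1 : ∑ j ∈ insert k s, (y j - if j = k then z else 0) = 0 := by
      rw [Finset.sum_sub_distrib, Finset.sum_ite_eq', if_pos (Finset.mem_insert_self _ _),
        ← hsum, sub_eq_zero]
      by_cases hk : k ∈ s
      · rw [Finset.insert_eq_of_mem hk]
      · rw [Finset.sum_insert hk, hys k hk, zero_add]
    have h2 := hzero (insert k s) (fun j => y j - if j = k then z else 0) (fun j => by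
      refine Submodule.sub_mem _ (hy j) ?_
      split_ifs with h
      · rw [h]; exact hz
      · exact Submodule.zero_mem _) h1 k (Finset.mem_insert_self _ _)
    simpa [sub_eq_zero] using h2
  have hES : ∀ k : ℕ, T.eigenspace (c - k) ≤ S k := by
    intro k x hx
    obtain ⟨s, y, hy, hys, hsum⟩ := hdec x
    rw [← hpick s y (fun k => hSe k (hy k)) hys k x hx hsum]
    exact hy k
  have hmap : ∀ k x, x ∈ S k → Φ x ∈ S k := fun k x hx => hES k (hmapE k x (hSe k hx))
  have hsurj : ∀ k, Function.Surjective (Φ.restrict (hmap k)) := by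
    rintro k ⟨z, hz⟩
    obtain ⟨x, hx⟩ := hs z
    obtain ⟨s, y, hy, hys, hsum⟩ := hdec x
    refine ⟨⟨y k, hy k⟩, Subtype.ext ?_⟩
    refine hpick s (fun j => Φ (y j)) (fun k => hmapE k _ (hSe k (hy k)))
      (fun j hj => by simp [hys j hj]) k z (hSe k hz) ?_
    rw [← map_sum, hsum, hx]
  have hinjk : ∀ k, Function.Injective (Φ.restrict (hmap k)) := fun k =>
    LinearMap.injective_iff_surjective.2 (hsurj k)
  rw [injective_iff_map_eq_zero]
  intro x hx
  obtain ⟨s, y, hy, hys, hsum⟩ := hdec x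
  rw [← hsum]
  refine Finset.sum_eq_zero fun k hk => ?_
  have h0 : Φ (y k) = 0 := by
    refine hzero s (fun j => Φ (y j)) (fun k => hmapE k _ (hSe k (hy k))) ?_ k hk
    rw [← map_sum, hsum, hx]
  have := @hinjk k ⟨y k, hy k⟩ 0 (Subtype.ext (by simpa using h0))
  simpa using congrArg Subtype.val this

end aux
section Fops

variable {m n : ℕ}

lemma mkOp_amono {M : Type} [AddCommGroup M] [Module ℂ M] (g : FaMon m n → M) (x : FaMon m n) :
    mkOp g (amono x) = g x := by
  simp [mkOp, amono]

lemma cntB_upd_true (b : Fin n → Bool) (i j : Fin n) (h : b j = false) :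
    cntB (Function.update b j true) i = cntB b i + if j < i then 1 else 0 := by
  unfold cntB
  split_ifs with hji
  · rw [← Finset.card_insert_of_notMem (a := j) (by simp [h])]
    congr 1
    ext k
    by_cases hk : k = j
    · subst hk; simp [hji]
    · simp [hk, Function.update_of_ne hk]
  · rw [add_zero]
    congr 1
    ext k
    by_cases hk : k = j
    · subst hk; simp [hji]
    · simp [Function.update_of_ne hk]

lemma cntA_upd_true (b : Fin n → Bool) (j : Fin n) (h : b j = false) :
    cntA (Function.update b j true) = cntA b + 1 := by
  unfold cntA
  rw [← Finset.card_insert_of_notMem (a := j) (by simp [h])]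
  congr 1
  ext k
  by_cases hk : k = j
  · subst hk; simp
  · simp [hk, Function.update_of_ne hk]

lemma cntB_upd_self (b : Fin n → Bool) (j : Fin n) (v : Bool) :
    cntB (Function.update b j v) j = cntB b j := by
  unfold cntB
  congr 1
  ext k
  by_cases hk : k = j
  · subst hk; simp
  · simp [Function.update_of_ne hk]

lemma cntA_upd_false (b : Fin n → Bool) (j : Fin n) (h : b j = true) :
    cntA (Function.update b j false) + 1 = cntA b := by
  rw [← cntA_upd_true _ j (by simp)]
  simp [← h]

/-- degree -/
def degM (x : FaMon m n) : ℕ := (∑ i, x.1 i) + cntA x.2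

lemma sum_upd (k : Fin m → ℕ) (i : Fin m) (v : ℕ) :
    (∑ j, Function.update k i v j) + k i = (∑ j, k j) + v := by
  rw [Finset.sum_update_of_mem (Finset.mem_univ i)]
  have := Finset.sum_eq_add_sum_sdiff_singleton_of_mem (Finset.mem_univ i) k
  omega

/-- homogeneous part -/
def Fd (m n d : ℕ) : Submodule ℂ (FaSp m n) := Submodule.span ℂ (amono '' {x | degM x = d})

lemma amono_mem (x : FaMon m n) : amono x ∈ Fd m n (degM x) :=
  Submodule.subset_span ⟨x, rfl, rfl⟩

lemma amono_mem' (x : FaMon m n) {d : ℕ} (h : degM x = d) : amono x ∈ Fd m n d :=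
  h ▸ amono_mem x

lemma Fd_map (d e : ℕ) (T : Module.End ℂ (FaSp m n))
    (h : ∀ x : FaMon m n, degM x = d → T (amono x) ∈ Fd m n e) :
    ∀ y ∈ Fd m n d, T y ∈ Fd m n e := by
  have : Fd m n d ≤ (Fd m n e).comap T := by
    refine Submodule.span_le.2 ?_
    rintro _ ⟨x, hx, rfl⟩
    exact h x hx
  exact fun y hy => this hy

lemma aDiv_mem (c : Ind m n) (d : ℕ) : ∀ y ∈ Fd m n d, aDiv c y ∈ Fd m n (d + 1) := by
  refine Fd_map _ _ _ ?_
  rintro x rfl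
  rcases c with i | i
  · simp only [aDiv, Sum.elim_inl, aDivE, mkOp_amono]
    refine amono_mem' _ ?_
    have := sum_upd x.1 i (x.1 i + 1)
    simp only [degM]; omega
  · simp only [aDiv, Sum.elim_inr, aDivO, mkOp_amono]
    split_ifs with h
    · exact Submodule.zero_mem _
    · refine Submodule.smul_mem _ _ (amono_mem' _ ?_)
      simp only [degM]
      rw [cntA_upd_true _ _ (by simpa using h)]; omega

lemma aDiv_single (c : Ind m n) (x : FaMon m n) :
    ∃ (s : ℂ) (x' : FaMon m n), aDiv c (amono x) = s • amono x' := by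
  rcases c with i | i
  · exact ⟨1, _, by simp only [aDiv, Sum.elim_inl, aDivE, mkOp_amono, one_smul]; rfl⟩
  · simp only [aDiv, Sum.elim_inr, aDivO, mkOp_amono]
    split_ifs with h
    · exact ⟨0, x, by simp⟩
    · exact ⟨_, _, rfl⟩

lemma aParB_inl (a : ℂ) (i : Fin m) : aParB (m := m) (n := n) a (emb (Sum.inl i)) = aParE i := rfl
lemma aParB_inr (a : ℂ) (i : Fin n) : aParB (m := m) (n := n) a (emb (Sum.inr i)) = aParO i := rfl
lemma aParB_z0 (a : ℂ) : aParB (m := m) (n := n) a z0 = aPar0 a := rfl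
lemma aDivB_z0 : aDivB (m := m) (n := n) z0 = 1 := rfl
lemma aDivB_emb (c : Ind m n) : aDivB (m := m) (n := n) (emb c) = aDiv c := by
  cases c <;> rfl

lemma aTD_mem (a : ℂ) (c j : Ind m n) (d : ℕ) :
    ∀ y ∈ Fd m n d, aTD a (emb c) (emb j) y ∈ Fd m n d := by
  rintro y hy
  rw [aTD, Module.End.mul_apply, aDivB_emb]
  rcases d with _ | d
  · have h : aParB a (emb j) y ∈ (⊥ : Submodule ℂ (FaSp m n)) := by
      have : Fd m n 0 ≤ (⊥ : Submodule ℂ (FaSp m n)).comap (aParB a (emb j)) := by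
        refine Submodule.span_le.2 ?_
        rintro _ ⟨x, hx, rfl⟩
        simp only [degM, Set.mem_ofPred_eq, Nat.add_eq_zero_iff, Finset.sum_eq_zero_iff,
          Finset.mem_univ, true_implies] at hx
        simp only [Submodule.comap_bot, SetLike.mem_coe, LinearMap.mem_ker]
        rcases j with i | i
        · simp [aParB_inl, aParE, mkOp_amono, hx.1 i]
        · have h2 := hx.2
          simp only [cntA, Finset.card_eq_zero, Finset.filter_eq_empty_iff, Finset.mem_univ,
            true_implies] at h2
          simp [aParB_inr, aParO, mkOp_amono, @h2 i]
      exact this hy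
    rw [(Submodule.mem_bot _).1 h, map_zero]
    exact Submodule.zero_mem _
  · refine aDiv_mem _ _ _ (Fd_map (d+1) d _ ?_ y hy)
    intro x hx
    rcases j with i | i
    · simp only [aParB_inl, aParE, mkOp_amono]
      rcases Nat.eq_zero_or_pos (x.1 i) with h | h
      · simp [h]
      · refine Submodule.smul_mem _ _ (amono_mem' _ ?_)
        have := sum_upd x.1 i (x.1 i - 1)
        simp only [degM] at hx ⊢; omega
    · simp only [aParB_inr, aParO, mkOp_amono]
      split_ifs with h
      · refine Submodule.smul_mem _ _ (amono_mem' _ ?_)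
        have := cntA_upd_false _ _ h
        simp only [degM] at hx ⊢; omega
      · exact Submodule.zero_mem _

lemma sgn_sq (k : ℕ) : ((-1 : ℂ) ^ k) * (-1) ^ k = 1 := by
  rw [← mul_pow]; simp

lemma aPar_aDiv (a : ℂ) (j : Ind m n) (x : FaMon m n) :
    aParB a (emb j) (aDiv j (amono x)) =
      amono x + ((-1 : ℂ) ^ (pI j)) • aDiv j (aParB a (emb j) (amono x)) := by
  rcases j with i | i
  · simp only [aDiv, Sum.elim_inl, aDivE, mkOp_amono, aParB_inl, aParE, map_smul, pI, pow_zero,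
      one_smul]
    simp only [Function.update_self, Function.update_idem, Nat.add_sub_cancel,
      Function.update_eq_self]
    rcases Nat.eq_zero_or_pos (x.1 i) with h | h
    · simp [h]
    · rw [Nat.sub_add_cancel h]
      simp only [Function.update_eq_self, Nat.cast_add, Nat.cast_one, add_smul, one_smul]
      rw [add_comm]
  · simp only [aDiv, Sum.elim_inr, aDivO, mkOp_amono, aParB_inr, aParO, pI, pow_one]
    by_cases h : x.2 i = true
    · have e : Function.update x.2 i true = x.2 := by rw [← h, Function.update_eq_self]
      simp [h, mkOp_amono, cntB_upd_self, smul_smul, sgn_sq, e]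
    · have h' : x.2 i = false := by simpa using h
      have e : Function.update x.2 i false = x.2 := by rw [← h', Function.update_eq_self]
      simp [h', mkOp_amono, cntB_upd_self, smul_smul, sgn_sq, e]

lemma aTD_diag (a : ℂ) (c : Ind m n) (x : FaMon m n) :
    aTD a (emb c) (emb c) (amono x) =
      (Sum.elim (fun i => (x.1 i : ℂ)) (fun i => if x.2 i then 1 else 0) c) • amono x := by
  rw [aTD, Module.End.mul_apply, aDivB_emb]
  rcases c with i | i
  · simp only [aDiv, Sum.elim_inl, aDivE, mkOp_amono, aParB_inl, aParE, map_smul]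
    simp only [Function.update_self, Function.update_idem]
    rcases Nat.eq_zero_or_pos (x.1 i) with h | h
    · simp [h]
    · rw [Nat.sub_add_cancel h]
      simp only [Function.update_eq_self]
  · simp only [aDiv, Sum.elim_inr, aDivO, mkOp_amono, aParB_inr, aParO]
    by_cases h : x.2 i = true
    · simp only [h, if_true, map_smul, mkOp_amono, Function.update_self,
        cntB_upd_self, Function.update_idem, smul_smul]
      simp [← h, smul_smul, sgn_sq]
    · have h' : x.2 i = false := by simpa using h
      simp [h']

lemma aDiv_comm (c j : Ind m n) (hcj : c ≠ j) (y : FaSp m n) :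
    aDiv c (aDiv j y) = ((-1 : ℂ) ^ (pI c * pI j)) • aDiv j (aDiv c y) := by
  have : (aDiv c) * (aDiv j) = ((-1 : ℂ) ^ (pI c * pI j)) • (aDiv j * aDiv c) := by
    refine Finsupp.lhom_ext' fun x => LinearMap.ext_ring ?_
    change aDiv c (aDiv j (amono x)) = ((-1 : ℂ) ^ (pI c * pI j)) • aDiv j (aDiv c (amono x))
    rcases c with i | i <;> rcases j with k | k
    · have h : i ≠ k := fun h => hcj (by rw [h])
      simp only [aDiv, Sum.elim_inl, aDivE, mkOp_amono, pI, pow_zero, one_smul, zero_mul,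
        Function.update_of_ne h, Function.update_of_ne h.symm]
      rw [Function.update_comm h]
    · simp only [aDiv, Sum.elim_inl, Sum.elim_inr, aDivE, aDivO, mkOp_amono, pI, pow_zero,
        one_smul, zero_mul]
      split_ifs <;> simp [mkOp_amono]
    · simp only [aDiv, Sum.elim_inl, Sum.elim_inr, aDivE, aDivO, mkOp_amono, pI, pow_zero,
        one_smul, mul_zero]
      split_ifs <;> simp [mkOp_amono]
    · have h : i ≠ k := fun h => hcj (by rw [h])
      simp only [aDiv, Sum.elim_inr, aDivO, mkOp_amono, pI, mul_one, pow_one]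
      by_cases hi : x.2 i = true
      · by_cases hk : x.2 k = true
        · simp [hi, hk]
        · simp [hi, hk, mkOp_amono, Function.update_of_ne h]
      · by_cases hk : x.2 k = true
        · simp [hi, hk, mkOp_amono, Function.update_of_ne h.symm]
        · simp only [hi, hk, mkOp_amono, map_smul, Function.update_of_ne h,
            Function.update_of_ne h.symm, if_false, Bool.false_eq_true, smul_smul]
          rw [cntB_upd_true _ _ _ (by simpa using hk), cntB_upd_true _ _ _ (by simpa using hi),
            Function.update_comm h]
          congr 1
          rcases lt_or_gt_of_ne h with h1 | h1
          · simp [h1, not_lt_of_gt h1]; ring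
          · simp [h1, not_lt_of_gt h1]; ring
  exact LinearMap.congr_fun this y

lemma mono_succ (y : FaMon m n) (d : ℕ) (hy : degM y = d + 1) :
    ∃ (c : Ind m n) (x : FaMon m n) (s : ℂ), degM x = d ∧ amono y = s • aDiv c (amono x) := by
  by_cases h : ∃ i, y.1 i ≠ 0
  · obtain ⟨i, hi⟩ := h
    refine ⟨Sum.inl i, (Function.update y.1 i (y.1 i - 1), y.2), 1, ?_, ?_⟩
    · have := sum_upd y.1 i (y.1 i - 1)
      simp only [degM] at hy ⊢; omega
    · simp only [aDiv, Sum.elim_inl, aDivE, mkOp_amono, one_smul, Function.update_self,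
        Function.update_idem]
      rw [Nat.sub_add_cancel (Nat.pos_of_ne_zero hi)]
      simp
  · push Not at h
    have h2 : ∃ i, y.2 i = true := by
      by_contra h3
      push Not at h3
      have : cntA y.2 = 0 := by
        simp only [cntA, Finset.card_eq_zero, Finset.filter_eq_empty_iff]
        exact fun i _ => h3 i
      simp [degM, h, this] at hy
    obtain ⟨i, hi⟩ := h2
    refine ⟨Sum.inr i, (y.1, Function.update y.2 i false), (-1) ^ cntB y.2 i, ?_, ?_⟩
    · have := cntA_upd_false _ _ hi
      simp only [degM] at hy ⊢; omega
    · simp only [aDiv, Sum.elim_inr, aDivO, mkOp_amono, Function.update_self,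
        Function.update_idem, cntB_upd_self, Bool.false_eq_true, if_false, smul_smul, sgn_sq]
      simp [← hi]

lemma aPar0_mono (a : ℂ) (x : FaMon m n) : aPar0 a (amono x) = (a - degM x) • amono x := by
  simp only [aPar0, mkOp_amono, degM]
  push_cast
  rw [sub_add_eq_sub_sub]

end Fops
section generic
variable {X : Type} [AddCommGroup X] [Module ℂ X] (N : Submodule ℂ X)

lemma gaux1 {A B C : X} {s : ℂ} (hs : s * s = 1) (h3 : A ∈ N) (h4 : C ∈ N)
    (h : A + s • B + C ∈ N) : B ∈ N := by
  rw [N.add_mem_iff_left h4, N.add_mem_iff_right h3] at h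
  have h5 := N.smul_mem s h
  rwa [smul_smul, hs, one_smul] at h5

lemma gaux2 {P K B : X} {s k : ℂ} (hs : s * s = 1) (h3 : K ∈ N)
    (h : (P + k • K) + s • B ∈ N) : B + s • P ∈ N := by
  rw [add_right_comm, N.add_mem_iff_left (N.smul_mem _ h3)] at h
  have h5 := N.smul_mem s h
  rwa [smul_add, smul_smul, hs, one_smul, add_comm] at h5

lemma gaux3 {P B : X} {s e z : ℂ} (hz : z = - (s * e)) (h : B + e • P ∈ N) :
    s • B - z • P ∈ N := by
  have := N.smul_mem s h
  rw [smul_add, smul_smul] at this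
  rwa [hz, neg_smul, sub_neg_eq_add]

lemma gaux4 {κ : Type} [Fintype κ] {P A : X} {B : κ → X} {z : κ → ℂ} {q : ℂ}
    (h : ∀ j, B j - z j • P ∈ N) (h2 : A - ∑ j, B j ∈ N) (hA : A = q • P)
    (hne : q - ∑ j, z j ≠ 0) : P ∈ N := by
  have h1 := N.sum_mem (t := Finset.univ) (fun j _ => h j)
  rw [Finset.sum_sub_distrib, ← Finset.sum_smul] at h1
  have h3 := N.add_mem h2 h1
  rw [sub_add_sub_cancel, hA, ← sub_smul] at h3
  exact (N.smul_mem_iff hne).1 h3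

end generic

section surj

variable {m n : ℕ}

/-- position of an index in the total order -/
def rkI : Ind m n → ℕ := Sum.elim (fun k => (k : ℕ)) (fun k => m + k)

lemma ilt_iff (i j : Ind m n) : iltI i j ↔ rkI i < rkI j := by
  rcases i with i | i <;> rcases j with j | j <;> simp [iltI, rkI] <;> omega

lemma rk_inj (i j : Ind m n) (h : rkI i = rkI j) : i = j := by
  rcases i with i | i <;> rcases j with j | j <;> simp [rkI] at h ⊢ <;> omega

variable {a r : ℂ} {lam : Ind m n → ℂ} (V : VermaM m n lam)
    (Θ : UEA (Ind (m+1) n) pI →ₐ[ℂ] Module.End ℂ (FaSp m n ⊗[ℂ] V.L))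
    (hΘ : IsTensorRep a r V.ρ Θ) (N : Submodule ℂ (FaSp m n ⊗[ℂ] V.L))
    (hN : ∀ u x, x ∈ N → Θ u x ∈ N)

/-- the comap of `N` under `y ↦ y ⊗ w` -/
def sect {L : Type} [AddCommGroup L] [Module ℂ L] (N : Submodule ℂ (FaSp m n ⊗[ℂ] L)) (w : L) :
    Submodule ℂ (FaSp m n) := N.comap ((TensorProduct.mk ℂ (FaSp m n) L).flip w)

lemma mem_sect {L : Type} [AddCommGroup L] [Module ℂ L] (N : Submodule ℂ (FaSp m n ⊗[ℂ] L))
    (w : L) (y : FaSp m n) : y ∈ sect N w ↔ y ⊗ₜ[ℂ] w ∈ N := Iff.rfl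

lemma Fd_le_sect {L : Type} [AddCommGroup L] [Module ℂ L] (N : Submodule ℂ (FaSp m n ⊗[ℂ] L))
    (w : L) (d : ℕ) (h : ∀ x, degM x = d → amono x ⊗ₜ[ℂ] w ∈ N) :
    ∀ y ∈ Fd m n d, y ⊗ₜ[ℂ] w ∈ N := by
  have : Fd m n d ≤ sect N w := by
    refine Submodule.span_le.2 ?_
    rintro _ ⟨x, hx, rfl⟩
    exact h x hx
  exact fun y hy => this hy

include hΘ hN

lemma layer_stable (d : ℕ) (hv : ∀ x, degM x = d → amono x ⊗ₜ[ℂ] V.v ∈ N) :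
    ∀ w x, degM x = d → amono x ⊗ₜ[ℂ] w ∈ N := by
  let W : Submodule ℂ V.L :=
    { carrier := {w | ∀ x, degM x = d → amono x ⊗ₜ[ℂ] w ∈ N}
      add_mem' := fun {p q} hp hq x hx => by
        rw [TensorProduct.tmul_add]; exact N.add_mem (hp x hx) (hq x hx)
      zero_mem' := fun x _ => by rw [TensorProduct.tmul_zero]; exact N.zero_mem
      smul_mem' := fun s p hp x hx => by
        rw [TensorProduct.tmul_smul]; exact N.smul_mem _ (hp x hx) }
  have hW : W = ⊤ := by
    refine V.gens W (stable_of_gen V.ρ W ?_) hv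
    intro i j w hw x hx
    have h1 := hΘ.1 i j x w
    have h2 := hN (gen pI (emb i) (emb j)) _ (hw x hx)
    rw [h1] at h2
    have h3 : (aTD a (emb i) (emb j)) (amono x) ⊗ₜ[ℂ] w ∈ N :=
      Fd_le_sect N w d hw _ (aTD_mem a i j d _ (amono_mem' x hx))
    have h4 : (if i = j then (((-1 : ℂ) ^ (pI i * pI j)) * r) • (amono x ⊗ₜ[ℂ] w) else 0) ∈ N := by
      split_ifs
      · exact N.smul_mem _ (hw x hx)
      · exact N.zero_mem
    exact gaux1 (X := FaSp m n ⊗[ℂ] V.L) N (sgn_sq _) h3 h4 h2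
  intro w
  have : w ∈ W := hW ▸ Submodule.mem_top
  exact this

lemma term_low (d : ℕ) (c j : Ind m n) (hjc : c ≠ j)
    (hj : ∀ y ∈ Fd m n d, aDiv j y ⊗ₜ[ℂ] V.v ∈ N) (x : FaMon m n) (hx : degM x = d) :
    ∃ e : ℕ, aDiv j (amono x) ⊗ₜ[ℂ] V.ρ (gen pI c j) V.v
      + ((-1 : ℂ) ^ e) • (aDiv c (amono x) ⊗ₜ[ℂ] V.v) ∈ N := by
  obtain ⟨t, x', hx'⟩ := aDiv_single j x
  refine ⟨(pI c + pI j) * parM x', ?_⟩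
  have h1 := hN (gen pI (emb c) (emb j)) _ (hj _ (amono_mem' x hx))
  have h2 : Θ (gen pI (emb c) (emb j)) (aDiv j (amono x) ⊗ₜ[ℂ] V.v) =
      aTD a (emb c) (emb j) (aDiv j (amono x)) ⊗ₜ[ℂ] V.v +
      ((-1 : ℂ) ^ ((pI c + pI j) * parM x')) •
        (aDiv j (amono x) ⊗ₜ[ℂ] V.ρ (gen pI c j) V.v) := by
    rw [hx', ← TensorProduct.smul_tmul', map_smul, hΘ.1, if_neg hjc, add_zero, smul_add, map_smul,
      ← TensorProduct.smul_tmul', ← TensorProduct.smul_tmul', smul_comm]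
  rw [h2] at h1
  have h3 : aTD a (emb c) (emb j) (aDiv j (amono x)) = aDiv c (amono x) +
      (((-1 : ℂ) ^ (pI j)) * (-1) ^ (pI c * pI j)) •
        aDiv j (aTD a (emb c) (emb j) (amono x)) := by
    simp only [aTD, Module.End.mul_apply, aDivB_emb]
    rw [aPar_aDiv, map_add, map_smul, aDiv_comm c j hjc, smul_smul]
  rw [h3, TensorProduct.add_tmul, ← TensorProduct.smul_tmul'] at h1
  exact gaux2 (X := FaSp m n ⊗[ℂ] V.L) N (sgn_sq _) (hj _ (aTD_mem a c j d _ (amono_mem' x hx))) h1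

lemma layer_succ (hint : ∀ i : Ind m n, ¬∃ z : ℤ, lam i - ((-1 : ℂ) ^ (pI i)) * a = (z : ℂ))
    (d : ℕ) (hd : ∀ w x, degM x = d → amono x ⊗ₜ[ℂ] w ∈ N) :
    ∀ (k : ℕ) (c : Ind m n), rkI c = k → ∀ y ∈ Fd m n d, aDiv c y ⊗ₜ[ℂ] V.v ∈ N := by
  intro k
  induction k using Nat.strong_induction_on with
  | _ k ih =>
  rintro c rfl
  have hred : (∀ x : FaMon m n, degM x = d → aDiv c (amono x) ⊗ₜ[ℂ] V.v ∈ N) →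
      ∀ y ∈ Fd m n d, aDiv c y ⊗ₜ[ℂ] V.v ∈ N := by
    intro h
    have : Fd m n d ≤ (sect N V.v).comap (aDiv c) := by
      refine Submodule.span_le.2 ?_
      rintro _ ⟨x, hx, rfl⟩
      exact h x hx
    exact fun y hy => this hy
  refine hred fun x hx => ?_
  have hterm : ∀ j : Ind m n, ∃ z : ℤ,
      (((-1 : ℂ) ^ (pI c * pI j)) * ((-1 : ℂ) ^ ((pI c + pI j) * parM x))) •
          ((aDiv j (amono x)) ⊗ₜ[ℂ] (V.ρ (gen pI c j) V.v)) -
      ((z : ℂ) + if j = c then (-1 : ℂ) ^ (pI c) * lam c else 0) •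
        (aDiv c (amono x) ⊗ₜ[ℂ] V.v) ∈ N := by
    intro j
    rcases lt_trichotomy (rkI c) (rkI j) with h | h | h
    · refine ⟨0, ?_⟩
      have hne : j ≠ c := by rintro rfl; exact lt_irrefl _ h
      rw [V.hw c j ((ilt_iff _ _).2 h)]
      simp [hne]
    · obtain rfl := rk_inj _ _ h
      refine ⟨0, ?_⟩
      have e1 : ((-1 : ℂ) ^ ((pI c + pI c) * parM x)) = 1 := by
        rw [← two_mul, mul_assoc, pow_mul]; simp
      have e2 : ((-1 : ℂ) ^ (pI c * pI c)) = (-1) ^ pI c := by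
        rcases c with c | c <;> simp [pI]
      rw [V.hwt c, e1, e2, TensorProduct.tmul_smul, smul_smul]
      simp
    · have hne : c ≠ j := by rintro rfl; exact lt_irrefl _ h
      obtain ⟨e, he⟩ := term_low V Θ hΘ N hN d c j hne (ih _ h j rfl) x hx
      refine ⟨-((-1) ^ (pI c * pI j) * (-1) ^ ((pI c + pI j) * parM x) * (-1) ^ e), ?_⟩
      refine gaux3 (X := FaSp m n ⊗[ℂ] V.L) N ?_ he
      rw [if_neg hne.symm]
      push_cast
      ring
  choose z hz using hterm
  have h2 := hN (gen pI (emb c) z0) _ (hd V.v x hx)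
  rw [hΘ.2.1] at h2
  refine gaux4 (X := FaSp m n ⊗[ℂ] V.L) N hz h2 (q := a - d) ?_ ?_
  · rw [aTD, Module.End.mul_apply, aDivB_emb, aParB_z0, aPar0_mono, map_smul,
      ← TensorProduct.smul_tmul', hx]
  rw [Finset.sum_add_distrib, Finset.sum_ite_eq', if_pos (Finset.mem_univ _)]
  intro h0
  refine hint c ⟨(-1) ^ (pI c) * (- d - ∑ j, z j), ?_⟩
  have e3 := sgn_sq (pI c)
  push_cast
  linear_combination (-(-1) ^ pI c) * h0 - lam c * e3

lemma all_mem (hint : ∀ i : Ind m n, ¬∃ z : ℤ, lam i - ((-1 : ℂ) ^ (pI i)) * a = (z : ℂ))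
    (h0 : amono (hwMon m n) ⊗ₜ[ℂ] V.v ∈ N) : N = ⊤ := by
  have key : ∀ d w x, degM x = d → amono x ⊗ₜ[ℂ] w ∈ N := by
    intro d
    induction d with
    | zero =>
      refine layer_stable V Θ hΘ N hN 0 ?_
      intro x hx
      have : x = hwMon m n := by
        simp only [degM, Nat.add_eq_zero_iff, Finset.sum_eq_zero_iff,
          Finset.mem_univ, true_implies] at hx
        have h2 := hx.2
        simp only [cntA, Finset.card_eq_zero, Finset.filter_eq_empty_iff, Finset.mem_univ,
            true_implies] at h2
        refine Prod.ext (funext hx.1) (funext fun i => by simpa [hwMon] using @h2 i)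
      rw [this]; exact h0
    | succ d ih =>
      refine layer_stable V Θ hΘ N hN (d+1) ?_
      intro y hy
      obtain ⟨c, x, s, hx, e⟩ := mono_succ y d hy
      rw [e, ← TensorProduct.smul_tmul']
      exact N.smul_mem _ (layer_succ V Θ hΘ N hN hint d ih _ c rfl _ (amono_mem' x hx))
  rw [eq_top_iff, ← TensorProduct.span_tmul_eq_top, Submodule.span_le]
  rintro _ ⟨y, w, rfl⟩
  induction y using Finsupp.induction_linear with
  | zero => simp
  | add f g hf hg => rw [TensorProduct.add_tmul]; exact N.add_mem hf hg
  | single x s =>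
    have : (Finsupp.single x s : FaSp m n) = s • amono x := by simp [amono]
    rw [this, ← TensorProduct.smul_tmul']
    exact N.smul_mem _ (key _ w x rfl)

end surj
section prods

variable {U : Type} [Ring U] [Algebra ℂ U]

lemma comm_mul {T P Q : U} {p q : ℂ} (hP : T * P = P * T + p • P) (hQ : T * Q = Q * T + q • Q) :
    T * (P * Q) = (P * Q) * T + (p + q) • (P * Q) := by
  rw [← mul_assoc, hP, add_mul, mul_assoc, hQ, mul_add, add_smul, smul_mul_assoc, mul_smul_comm,
    mul_assoc]
  abel

lemma comm_pow {T P : U} {p : ℂ} (hP : T * P = P * T + p • P) (k : ℕ) :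
    T * P ^ k = P ^ k * T + ((k : ℂ) * p) • P ^ k := by
  induction k with
  | zero => simp
  | succ k ih =>
    rw [pow_succ, comm_mul ih hP]
    push_cast
    ring_nf

lemma comm_ofFn {T : U} {k : ℕ} (P : Fin k → U) (p : Fin k → ℂ)
    (h : ∀ i, T * P i = P i * T + p i • P i) :
    T * (List.ofFn P).prod = (List.ofFn P).prod * T + (∑ i, p i) • (List.ofFn P).prod := by
  induction k with
  | zero => simp
  | succ k ih =>
    rw [List.ofFn_succ, List.prod_cons, Fin.sum_univ_succ]
    exact comm_mul (h 0) (ih _ _ fun i => h i.succ)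

lemma even_prod {k : ℕ} (y : Fin k → U) (hc : ∀ i j, y i * y j = y j * y i) (e : Fin k → ℕ)
    (c : Fin k) : y c * (List.ofFn fun i => y i ^ e i).prod =
      (List.ofFn fun i => y i ^ (Function.update e c (e c + 1)) i).prod := by
  induction k with
  | zero => exact c.elim0
  | succ k ih =>
    rw [List.ofFn_succ, List.ofFn_succ, List.prod_cons, List.prod_cons]
    refine Fin.cases ?_ (fun c => ?_) c
    · rw [← mul_assoc, ← pow_succ']
      congr 1
    · have h1 : Commute (y c.succ) (y 0 ^ e 0) := Commute.pow_right (hc _ _) _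
      rw [← mul_assoc, h1.eq, mul_assoc, ih (fun i => y i.succ) (fun i j => hc _ _)
        (fun i => e i.succ) c]
      congr 3
      funext i
      by_cases h : i = c
      · subst h; simp
      · rw [Function.update_of_ne h, Function.update_of_ne (by simpa using h)]

lemma odd_prod {k : ℕ} (y : Fin k → U) (hc : ∀ i j, y i * y j = - (y j * y i))
    (hsq : ∀ i, y i * y i = 0) (b : Fin k → Bool)
    (c : Fin k) : ∃ (s : ℂ) (b' : Fin k → Bool),
      y c * (List.ofFn fun i => if b i then y i else 1).prod =
      s • (List.ofFn fun i => if b' i then y i else 1).prod := by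
  induction k with
  | zero => exact c.elim0
  | succ k ih =>
    revert c
    refine Fin.cases ?_ (fun c => ?_)
    · by_cases h : b 0 = true
      · refine ⟨0, b, ?_⟩
        rw [List.ofFn_succ, List.prod_cons, ← mul_assoc, if_pos h, hsq]
        simp
      · refine ⟨1, Fin.cons true (fun i => b i.succ), ?_⟩
        rw [List.ofFn_succ, List.ofFn_succ, List.prod_cons, List.prod_cons, if_neg h]
        simp
    · obtain ⟨s, b', h'⟩ := ih (fun i => y i.succ) (fun i j => hc _ _) (fun i => hsq _)
        (fun i => b i.succ) c
      by_cases h : b 0 = true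
      · refine ⟨-s, Fin.cons true b', ?_⟩
        rw [List.ofFn_succ, List.ofFn_succ, List.prod_cons, List.prod_cons, if_pos h, ← mul_assoc,
          hc, neg_mul, mul_assoc, h']
        simp
      · refine ⟨s, Fin.cons false b', ?_⟩
        rw [List.ofFn_succ, List.ofFn_succ, List.prod_cons, List.prod_cons, if_neg h, one_mul, h']
        simp

end prods

lemma g_sub_smul {U : Type} [Ring U] [Algebra ℂ U] (a b : ℂ) (x : U) :
    a • x - b • x = (a - b) • x := (sub_smul a b x).symm

lemma g_neg {U : Type} [Ring U] [Algebra ℂ U] {x y : U} {s : ℂ} (h : x = s • y) (hs : s = -1) :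
    x = - y := by rw [h, hs, neg_smul, one_smul]

lemma g_pos {U : Type} [Ring U] [Algebra ℂ U] {x y : U} {s : ℂ} (h : x = s • y) (hs : s = 1) :
    x = y := by rw [h, hs, one_smul]

lemma g_sq {U : Type} [Ring U] [Algebra ℂ U] {x : U} (h : x = - x) : x = 0 := by
  have h2 : (2 : ℂ) • x = 0 := by
    rw [two_smul]; nth_rewrite 1 [h]; simp
  exact (smul_eq_zero.1 h2).resolve_left two_ne_zero

section weights

variable {ι : Type} {p : ι → ℕ} [DecidableEq ι] [Fintype ι]

/-- Cartan element -/
def Hh (p : ι → ℕ) (h : ι → ℂ) : UEA ι p := ∑ i, h i • gen p i i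

lemma sgn_even (a b : ℕ) : ((-1 : ℂ) ^ ((a + a) * b)) = 1 := by
  rw [← two_mul, mul_assoc, pow_mul]; simp

lemma Hh_gen (h : ι → ℂ) (k l : ι) :
    Hh p h * gen p k l = gen p k l * Hh p h + (h k - h l) • gen p k l := by
  have : ∀ i, (h i • gen p i i) * gen p k l = gen p k l * (h i • gen p i i) +
      ((if i = k then h i • gen p i l else 0) - (if l = i then h i • gen p k i else 0)) := by
    intro i
    rw [smul_mul_assoc, gen_rel, sgn_even, one_smul, one_smul, smul_add, mul_smul_comm, smul_sub]
    congr 2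
    · split_ifs <;> simp
    · split_ifs <;> simp
  rw [Hh, Finset.sum_mul, Finset.sum_congr rfl fun i _ => this i, Finset.sum_add_distrib,
    ← Finset.mul_sum, Finset.sum_sub_distrib]
  simp only [Finset.sum_ite_eq, Finset.sum_ite_eq', Finset.mem_univ, if_true]
  exact congrArg (fun t => gen p k l * (∑ i, h i • gen p i i) + t)
    (g_sub_smul (U := UEA ι p) (h k) (h l) (gen p k l))

lemma wt_apply {L : Type} [AddCommGroup L] [Module ℂ L]
    (ρ : UEA ι p →ₐ[ℂ] Module.End ℂ L) {T P : UEA ι p} {δ μ : ℂ} (h : T * P = P * T + δ • P)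
    {u : L} (hu : ρ T u = μ • u) : ρ T (ρ P u) = (μ + δ) • ρ P u := by
  rw [← Module.End.mul_apply, ← map_mul, h]
  simp [hu, add_smul]

end weights

section main

variable {m n : ℕ}

lemma pI_emb (c : Ind m n) : pI (emb c) = pI c := by cases c <;> rfl
lemma pI_z0 : pI (z0 : Ind (m+1) n) = 0 := rfl
lemma rk_emb (c : Ind m n) : rkI (emb c) = rkI c + 1 := by
  cases c <;> simp [emb, rkI]; omega
lemma rk_z0 : rkI (z0 : Ind (m+1) n) = 0 := rfl

lemma ind_cases (i : Ind (m+1) n) : i = z0 ∨ ∃ c : Ind m n, i = emb c := by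
  rcases i with i | i
  · rcases Fin.eq_zero_or_eq_succ i with rfl | ⟨k, rfl⟩
    · exact Or.inl rfl
    · exact Or.inr ⟨Sum.inl k, rfl⟩
  · exact Or.inr ⟨Sum.inr i, rfl⟩

lemma sum_ind {M : Type} [AddCommMonoid M] (f : Ind (m+1) n → M) :
    ∑ i, f i = f z0 + ∑ c : Ind m n, f (emb c) := by
  rw [Fintype.sum_sum_type, Fin.sum_univ_succ, Fintype.sum_sum_type, add_assoc]
  rfl

/-- lowering generator `e_{c0}` -/
def lw (c : Ind m n) : UEA (Ind (m+1) n) pI := gen pI (emb c) z0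

lemma lw_comm (c d : Ind m n) : lw c * lw d = ((-1 : ℂ) ^ (pI c * pI d)) • (lw d * lw c) := by
  have := gen_rel (p := pI) (emb c) z0 (emb d) z0
  rw [if_neg (emb_ne_z0 d).symm, if_neg (emb_ne_z0 c).symm] at this
  simpa [lw, pI_emb, pI_z0] using this

/-- the ordered monomial in the `e_{c0}` -/
def Ex (x : FaMon m n) : UEA (Ind (m+1) n) pI :=
  (List.ofFn fun i => lw (Sum.inl i : Ind m n) ^ x.1 i).prod *
  (List.ofFn fun i => if x.2 i then lw (Sum.inr i : Ind m n) else 1).prod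

lemma Ex_hw : Ex (hwMon m n) = 1 := by
  simp [Ex, hwMon]

lemma lw_Ex (c : Ind m n) (x : FaMon m n) : ∃ (s : ℂ) (x' : FaMon m n), lw c * Ex x = s • Ex x' := by
  rcases c with c | c
  · refine ⟨1, (Function.update x.1 c (x.1 c + 1), x.2), ?_⟩
    rw [Ex, ← mul_assoc, even_prod (fun i => lw (Sum.inl i : Ind m n)), one_smul, Ex]
    intro i j
    exact g_pos (lw_comm (Sum.inl i : Ind m n) (Sum.inl j)) (by simp [pI])
  · have hcm : Commute (lw (Sum.inr c : Ind m n))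
        (List.ofFn fun i => lw (Sum.inl i : Ind m n) ^ x.1 i).prod := by
      refine Commute.list_prod_right _ _ ?_
      intro y hy
      obtain ⟨i, rfl⟩ := List.mem_ofFn.1 hy
      refine Commute.pow_right ?_ _
      exact g_pos (lw_comm (Sum.inr c : Ind m n) (Sum.inl i)) (by simp [pI])
    have hc : ∀ i j : Fin n, lw (Sum.inr i : Ind m n) * lw (Sum.inr j) =
        - (lw (Sum.inr j) * lw (Sum.inr i)) := by
      intro i j
      exact g_neg (lw_comm (Sum.inr i : Ind m n) (Sum.inr j)) (by simp [pI])
    have hsq : ∀ i : Fin n, lw (Sum.inr i : Ind m n) * lw (Sum.inr i) = 0 := by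
      intro i
      exact g_sq (hc i i)
    obtain ⟨s, b', h⟩ := odd_prod (fun i => lw (Sum.inr i : Ind m n)) hc hsq x.2 c
    refine ⟨s, (x.1, b'), ?_⟩
    rw [Ex, ← mul_assoc, hcm.eq, mul_assoc, h, mul_smul_comm, Ex]

/-- exponent -/
def kx (x : FaMon m n) : Ind m n → ℕ := Sum.elim x.1 (fun i => if x.2 i then 1 else 0)

/-- height function -/
def hI : Ind m n → ℂ := fun i => -(rkI i : ℂ)

lemma Ex_wt (x : FaMon m n) : Hh pI hI * Ex x = Ex x * Hh pI hI +
    (-((∑ c, (rkI c + 1) * kx x c : ℕ) : ℂ)) • Ex x := by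
  have hl : ∀ c : Ind m n, Hh pI hI * lw c = lw c * Hh pI hI + (-((rkI c : ℂ) + 1)) • lw c := by
    intro c
    rw [lw, Hh_gen]
    simp [hI, rk_emb, rk_z0]
  have h1 := comm_ofFn (T := Hh pI hI) (fun i => lw (Sum.inl i : Ind m n) ^ x.1 i) _
    (fun i => comm_pow (hl _) _)
  have h2 := comm_ofFn (T := Hh pI hI) (fun i => if x.2 i then lw (Sum.inr i : Ind m n) else 1)
    (fun i => if x.2 i then (-((rkI (Sum.inr i : Ind m n) : ℂ) + 1)) else 0)
    (fun i => by
      split_ifs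
      · exact hl _
      · simp)
  rw [Ex, comm_mul h1 h2]
  congr 2
  rw [Fintype.sum_sum_type]
  push_cast
  rw [neg_add, ← Finset.sum_neg_distrib, ← Finset.sum_neg_distrib]
  congr 1
  · refine Finset.sum_congr rfl fun i _ => ?_
    simp [kx]; ring
  · refine Finset.sum_congr rfl fun i _ => ?_
    simp only [kx, Sum.elim_inr]
    split_ifs <;> simp

/-- twisted embedding -/
def twFun (r : ℂ) (q : Ind m n × Ind m n) : UEA (Ind (m+1) n) pI :=
  gen pI (emb q.1) (emb q.2) - (if q.1 = q.2 then (-1 : ℂ) ^ (pI q.1) * r else 0) • 1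

lemma exists_tw (r : ℂ) : ∃ F : UEA (Ind m n) pI →ₐ[ℂ] UEA (Ind (m+1) n) pI,
    ∀ c d, F (gen pI c d) = twFun r (c, d) := by
  refine ⟨RingQuot.liftAlgHom ℂ ⟨FreeAlgebra.lift ℂ (twFun r), ?_⟩, ?_⟩
  · rintro _ _ ⟨i, j, k, l⟩
    have hs1 : i = j → ((-1 : ℂ) ^ ((pI i + pI j) * (pI k + pI l))) = 1 := by
      rintro rfl; exact sgn_even _ _
    have hs2 : k = l → ((-1 : ℂ) ^ ((pI i + pI j) * (pI k + pI l))) = 1 := by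
      rintro rfl; rw [mul_comm]; exact sgn_even _ _
    have hs3 : j = k → l = i → (-1 : ℂ) ^ (pI i) * r =
        ((-1 : ℂ) ^ ((pI i + pI j) * (pI k + pI l))) * ((-1 : ℂ) ^ (pI k) * r) := by
      rintro rfl rfl
      rcases l with l | l <;> rcases j with j | j <;> simp [pI] <;> norm_num
    have hg := gen_rel (p := pI) (emb i) (emb j) (emb k) (emb l)
    simp only [pI_emb, emb_injective.eq_iff] at hg
    generalize ((-1 : ℂ) ^ ((pI i + pI j) * (pI k + pI l))) = s at *
    have e1 : FreeAlgebra.lift ℂ (twFun r) (if j = k then FreeAlgebra.ι ℂ (i, l) else 0) =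
      if j = k then twFun r (i, l) else 0 := by split_ifs <;> simp
    have e2 : FreeAlgebra.lift ℂ (twFun r) (if l = i then FreeAlgebra.ι ℂ (k, j) else 0) =
      if l = i then twFun r (k, j) else 0 := by split_ifs <;> simp
    simp only [map_sub, map_mul, map_smul, FreeAlgebra.lift_ι_apply, e1, e2]
    simp only [twFun]
    have hs1' : (if i = j then (-1 : ℂ) ^ (pI i) * r else 0) * (1 - s) = 0 := by
      split_ifs with h
      · rw [hs1 h]; ring
      · ring
    have hs2' : (if k = l then (-1 : ℂ) ^ (pI k) * r else 0) * (1 - s) = 0 := by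
      split_ifs with h
      · rw [hs2 h]; ring
      · ring
    have e3 : (if j = k then gen pI (emb i) (emb l) -
          (if i = l then (-1 : ℂ) ^ (pI i) * r else 0) • (1 : UEA (Ind (m+1) n) pI) else 0) -
        s • (if l = i then gen pI (emb k) (emb j) -
          (if k = j then (-1 : ℂ) ^ (pI k) * r else 0) • (1 : UEA (Ind (m+1) n) pI) else 0) =
        (if j = k then gen pI (emb i) (emb l) else 0) -
          s • (if l = i then gen pI (emb k) (emb j) else 0) := by
      by_cases h1 : j = k
      · by_cases h2 : l = i
        · rw [if_pos h1, if_pos h2, if_pos h2.symm, if_pos h1.symm, if_pos h1, if_pos h2,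
            smul_sub, smul_smul, ← hs3 h1 h2]
          abel
        · simp [h1, h2, Ne.symm h2]
      · simp [h1, Ne.symm h1]
    rw [e3]
    generalize (if i = j then (-1 : ℂ) ^ (pI i) * r else 0) = x1 at *
    generalize (if k = l then (-1 : ℂ) ^ (pI k) * r else 0) = x2 at *
    generalize (if j = k then gen pI (emb i) (emb l) else 0) -
          s • (if l = i then gen pI (emb k) (emb j) else 0) = Z at *
    simp only [sub_mul, mul_sub, smul_mul_assoc, mul_smul_comm, one_mul, mul_one, hg, smul_sub,
      smul_smul]
    have q1 : s * x1 = x1 := by linear_combination -hs1'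
    have q2 : s * x2 = x2 := by linear_combination -hs2'
    have q3 : s * (x1 * x2) = x2 * x1 := by linear_combination x1 * q2
    rw [q1, q2, q3]
    abel
  · intro c d
    simp [gen]

end main
section final

variable {m n : ℕ}

/-- lowering letters -/
def lowS (m n : ℕ) : Set (Ind m n × Ind m n) := {q | rkI q.2 < rkI q.1}

/-- letters `(c, 0)` -/
def zS (m n : ℕ) : Set (Ind (m+1) n × Ind (m+1) n) := {q | ∃ c : Ind m n, q = (emb c, z0)}

/-- height of a word -/
def htW (l : List (lowS m n)) : ℕ := (l.map fun s => rkI s.1.1 - rkI s.1.2).sum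

lemma len_le_ht (l : List (lowS m n)) : l.length ≤ htW l := by
  induction l with
  | nil => simp
  | cons s l ih =>
    have h1 : rkI s.1.2 < rkI s.1.1 := s.2
    simp only [htW, List.map_cons, List.sum_cons, List.length_cons] at ih ⊢
    omega

lemma verma_span {lam : Ind m n → ℂ} (V : VermaM m n lam) :
    wordSpan V.ρ (lowS m n) {V.v} = ⊤ := by
  refine V.gens _ (wordSpan_stable _ _ _ ?_) (wordSpan_base _ _ _ rfl)
  rintro i j _ rfl
  rcases lt_trichotomy (rkI i) (rkI j) with h | h | h
  · rw [V.hw i j ((ilt_iff _ _).2 h)]; exact Submodule.zero_mem _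
  · obtain rfl := rk_inj _ _ h
    rw [V.hwt]
    exact Submodule.smul_mem _ _ (wordSpan_base _ _ _ rfl)
  · exact wordSpan_letter V.ρ (lowS m n) {V.v} (i, j) h _ (wordSpan_base _ _ _ rfl)

lemma word_wt {lam : Ind m n → ℂ} (V : VermaM m n lam) (l : List (lowS m n)) :
    V.ρ (Hh pI (fun c => hI (emb c))) (wordAct V.ρ (lowS m n) l V.v) =
      ((∑ c, hI (emb c) * lam c) - (htW l : ℂ)) • wordAct V.ρ (lowS m n) l V.v := by
  induction l with
  | nil =>
    simp only [wordAct, List.foldr_nil, Hh, map_sum, map_smul, LinearMap.sum_apply,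
      LinearMap.smul_apply, V.hwt, smul_smul, ← Finset.sum_smul]
    simp [htW]
  | cons s l ih =>
    change V.ρ _ (V.ρ (gen pI s.1.1 s.1.2) (wordAct V.ρ (lowS m n) l V.v)) =
      _ • (V.ρ (gen pI s.1.1 s.1.2) (wordAct V.ρ (lowS m n) l V.v))
    rw [wt_apply V.ρ (Hh_gen _ _ _) ih]
    congr 1
    have h1 : rkI s.1.2 < rkI s.1.1 := s.2
    simp only [htW, List.map_cons, List.sum_cons, hI, rk_emb]
    push_cast [Nat.cast_sub h1.le]
    ring

variable {a r : ℂ} {lam : Ind m n → ℂ} (V : VermaM m n lam)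
    (Θ : UEA (Ind (m+1) n) pI →ₐ[ℂ] Module.End ℂ (FaSp m n ⊗[ℂ] V.L))
    (hΘ : IsTensorRep a r V.ρ Θ)

include hΘ in
lemma tensor_wt (x : FaMon m n) (w : V.L) (μ : ℂ)
    (hw : V.ρ (Hh pI (fun c => hI (emb c))) w = μ • w) :
    Θ (Hh pI hI) (amono x ⊗ₜ[ℂ] w) =
      ((∑ c : Ind m n, hI (emb c) * ((-1) ^ (pI c * pI c) * r)) + μ
        - ((∑ c, (rkI c + 1) * kx x c : ℕ) : ℂ)) • (amono x ⊗ₜ[ℂ] w) := by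
  have h1 : ∀ c : Ind m n, Θ (hI (emb c) • gen pI (emb c) (emb c)) (amono x ⊗ₜ[ℂ] w) =
      (hI (emb c) * ((-1) ^ (pI c * pI c) * r) - (((rkI c + 1) * kx x c : ℕ) : ℂ)) •
        (amono x ⊗ₜ[ℂ] w) +
      amono x ⊗ₜ[ℂ] (V.ρ (hI (emb c) • gen pI c c) w) := by
    intro c
    rw [map_smul, LinearMap.smul_apply, hΘ.1, if_pos rfl, sgn_even, one_smul, aTD_diag,
      map_smul, LinearMap.smul_apply, TensorProduct.tmul_smul, ← TensorProduct.smul_tmul']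
    have e : (Sum.elim (fun i => (x.1 i : ℂ)) (fun i => if x.2 i then 1 else 0) c : ℂ)
        = kx x c := by
      rcases c with c | c
      · rfl
      · simp [kx]
    rw [e, smul_add, smul_add, smul_smul, smul_smul, add_right_comm, ← add_smul]
    congr 2
    simp only [hI, rk_emb]
    push_cast
    ring
  have h2 : Θ (Hh pI hI) (amono x ⊗ₜ[ℂ] w) =
      ∑ c : Ind m n, Θ (hI (emb c) • gen pI (emb c) (emb c)) (amono x ⊗ₜ[ℂ] w) := by
    rw [Hh, sum_ind]
    simp [hI, rk_z0]
  rw [h2, Finset.sum_congr rfl fun c _ => h1 c, Finset.sum_add_distrib, ← Finset.sum_smul,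
    ← TensorProduct.tmul_sum, ← LinearMap.sum_apply, ← map_sum]
  rw [Hh] at hw
  rw [hw, TensorProduct.tmul_smul, ← add_smul]
  congr 1
  rw [Finset.sum_sub_distrib]
  push_cast
  ring

lemma lam_emb (a r : ℂ) (lam : Ind m n → ℂ) (c : Ind m n) :
    lamTilde a r lam (emb c) = lam c + (-1) ^ (pI c) * r := by
  rcases c with c | c
  · simp [lamTilde, emb, pI]
  · simp [lamTilde, emb, pI, sub_eq_add_neg]

lemma exists_psi (V' : VermaM (m+1) n (lamTilde a r lam)) :
    ∃ ψ : V.L →ₗ[ℂ] V'.L, ψ V.v = V'.v ∧ (∀ c d w, ψ (V.ρ (gen pI c d) w) =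
      V'.ρ (gen pI (emb c) (emb d)) (ψ w) -
        (if c = d then (-1 : ℂ) ^ (pI c) * r else 0) • ψ w) := by
  obtain ⟨F, hF⟩ := exists_tw (m := m) (n := n) r
  have hF' : ∀ c d w, (V'.ρ.comp F) (gen pI c d) w = V'.ρ (gen pI (emb c) (emb d)) w -
        (if c = d then (-1 : ℂ) ^ (pI c) * r else 0) • w := by
    intro c d w
    rw [AlgHom.comp_apply, hF, twFun, map_sub, map_smul, map_one]
    rfl
  obtain ⟨ψ, h1, h2⟩ := V.univ V'.L (V'.ρ.comp F) V'.v (by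
    intro i j hij
    have hne : i ≠ j := by
      rintro rfl
      exact lt_irrefl _ ((ilt_iff _ _).1 hij)
    rw [hF', if_neg hne, V'.hw, zero_smul, sub_zero]
    rw [ilt_iff] at hij ⊢
    rw [rk_emb, rk_emb]; omega) (by
    intro i
    rw [hF', if_pos rfl, V'.hwt, lam_emb, ← sub_smul, add_sub_cancel_right])
  exact ⟨ψ, h1, fun c d w => by rw [h2, hF']⟩

/-- induction principle for Verma modules -/
lemma verma_ind (P : Submodule ℂ V.L) (hv : V.v ∈ P)
    (h : ∀ c d w, w ∈ P → V.ρ (gen pI c d) w ∈ P) (w : V.L) : w ∈ P := by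
  have : P = ⊤ := V.gens P (stable_of_gen _ _ h) hv
  rw [this]; trivial

lemma psi_kill (V' : VermaM (m+1) n (lamTilde a r lam)) (ψ : V.L →ₗ[ℂ] V'.L)
    (h1 : ψ V.v = V'.v) (h2 : ∀ c d w, ψ (V.ρ (gen pI c d) w) =
      V'.ρ (gen pI (emb c) (emb d)) (ψ w) -
        (if c = d then (-1 : ℂ) ^ (pI c) * r else 0) • ψ w) :
    (∀ b w, V'.ρ (gen pI z0 (emb b)) (ψ w) = 0) ∧
    (∀ w, V'.ρ (gen pI z0 z0) (ψ w) = (a + r) • ψ w) := by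
  constructor
  · let P : Submodule ℂ V.L := ⨅ b : Ind m n,
      LinearMap.ker ((V'.ρ (gen pI z0 (emb b))).comp ψ)
    have hP : ∀ w, w ∈ P ↔ ∀ b, V'.ρ (gen pI z0 (emb b)) (ψ w) = 0 := by
      intro w; simp [P, Submodule.mem_iInf]
    have := verma_ind V P ?_ ?_
    · exact fun b w => (hP w).1 (this w) b
    · rw [hP]; intro b
      rw [h1, V'.hw]
      rw [ilt_iff, rk_emb, rk_z0]; omega
    · intro c d w hw
      rw [hP] at hw ⊢
      intro b
      rw [h2, map_sub, map_smul, hw, smul_zero, sub_zero, rep_rel, hw, map_zero, smul_zero,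
        if_neg (emb_ne_z0 d), smul_zero, hw]
      simp
  · let P : Submodule ℂ V.L := LinearMap.ker ((V'.ρ (gen pI z0 z0) - (a + r) • 1).comp ψ)
    have hP : ∀ w, w ∈ P ↔ V'.ρ (gen pI z0 z0) (ψ w) = (a + r) • ψ w := by
      intro w; simp [P, sub_eq_zero]
    intro w
    refine (hP w).1 (verma_ind V P ?_ ?_ w)
    · rw [hP, h1, V'.hwt]; rfl
    · intro c d w hw
      rw [hP] at hw ⊢
      rw [h2, map_sub, map_smul, hw, rep_rel, hw, if_neg (emb_ne_z0 c).symm,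
        if_neg (emb_ne_z0 d), sgn_even, one_smul, smul_zero, sub_zero, add_zero, map_smul,
        smul_sub, smul_comm (a + r)]

/-- the PBW-type map -/
def sigma (V' : VermaM (m+1) n (lamTilde a r lam)) (ψ : V.L →ₗ[ℂ] V'.L) :
    FaSp m n ⊗[ℂ] V.L →ₗ[ℂ] V'.L :=
  TensorProduct.lift (mkOp fun x => (V'.ρ (Ex x)).comp ψ)

lemma sigma_apply (V' : VermaM (m+1) n (lamTilde a r lam)) (ψ : V.L →ₗ[ℂ] V'.L)
    (x : FaMon m n) (w : V.L) : sigma V V' ψ (amono x ⊗ₜ[ℂ] w) = V'.ρ (Ex x) (ψ w) := by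
  rw [sigma, TensorProduct.lift.tmul, mkOp_amono]
  rfl

lemma tens_ind {L : Type} [AddCommGroup L] [Module ℂ L] (N : Submodule ℂ (FaSp m n ⊗[ℂ] L))
    (B : Set L) (hB : Submodule.span ℂ B = ⊤)
    (h : ∀ x, ∀ w ∈ B, amono x ⊗ₜ[ℂ] w ∈ N) : N = ⊤ := by
  rw [eq_top_iff, ← TensorProduct.span_tmul_eq_top, Submodule.span_le]
  rintro _ ⟨y, w, rfl⟩
  induction y using Finsupp.induction_linear with
  | zero => simp
  | add f g hf hg => rw [TensorProduct.add_tmul]; exact N.add_mem hf hg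
  | single x s =>
    have : (Finsupp.single x s : FaSp m n) = s • amono x := by simp [amono]
    rw [this, ← TensorProduct.smul_tmul']
    refine N.smul_mem _ ?_
    have hw : w ∈ Submodule.span ℂ B := hB ▸ Submodule.mem_top
    have : Submodule.span ℂ B ≤ N.comap (TensorProduct.mk ℂ (FaSp m n) L (amono x)) :=
      Submodule.span_le.2 (h x)
    exact this hw

lemma sigma_surj (V' : VermaM (m+1) n (lamTilde a r lam)) (ψ : V.L →ₗ[ℂ] V'.L)
    (h1 : ψ V.v = V'.v) (h2 : ∀ c d w, ψ (V.ρ (gen pI c d) w) =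
      V'.ρ (gen pI (emb c) (emb d)) (ψ w) -
        (if c = d then (-1 : ℂ) ^ (pI c) * r else 0) • ψ w) :
    LinearMap.range (sigma V V' ψ) = ⊤ := by
  obtain ⟨k1, k2⟩ := psi_kill V V' ψ h1 h2
  have hψ : ∀ w, ψ w ∈ LinearMap.range (sigma V V' ψ) := fun w =>
    ⟨amono (hwMon m n) ⊗ₜ[ℂ] w, by rw [sigma_apply, Ex_hw, map_one]; rfl⟩
  have hst : ∀ s ∈ zS m n, ∀ x ∈ LinearMap.range (sigma V V' ψ),
      V'.ρ (gen pI s.1 s.2) x ∈ LinearMap.range (sigma V V' ψ) := by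
    rintro _ ⟨c, rfl⟩ _ ⟨y, rfl⟩
    have : (LinearMap.range (sigma V V' ψ)).comap
        ((V'.ρ (gen pI (emb c) z0)).comp (sigma V V' ψ)) = ⊤ := by
      refine tens_ind _ Set.univ Submodule.span_univ ?_
      intro x w _
      change V'.ρ (gen pI (emb c) z0) (sigma V V' ψ (amono x ⊗ₜ[ℂ] w)) ∈
        LinearMap.range (sigma V V' ψ)
      rw [sigma_apply, ← Module.End.mul_apply, ← map_mul]
      obtain ⟨s, x', hx'⟩ := lw_Ex c x
      rw [lw] at hx'
      rw [hx', map_smul, LinearMap.smul_apply, ← sigma_apply]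
      exact Submodule.smul_mem _ _ ⟨_, rfl⟩
    have hy : y ∈ (LinearMap.range (sigma V V' ψ)).comap
        ((V'.ρ (gen pI (emb c) z0)).comp (sigma V V' ψ)) := by rw [this]; trivial
    exact hy
  have hle := wordSpan_le V'.ρ (zS m n) (Set.range ψ) _ (by rintro _ ⟨w, rfl⟩; exact hψ w) hst
  have htop : wordSpan V'.ρ (zS m n) (Set.range ψ) = ⊤ := by
    refine V'.gens _ (wordSpan_stable _ _ _ ?_) (wordSpan_base _ _ _ ⟨V.v, h1⟩)
    rintro i j _ ⟨w, rfl⟩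
    have hb : ∀ w, ψ w ∈ wordSpan V'.ρ (zS m n) (Set.range ψ) := fun w =>
      wordSpan_base _ _ _ ⟨w, rfl⟩
    rcases ind_cases i with rfl | ⟨c, rfl⟩ <;> rcases ind_cases j with rfl | ⟨d, rfl⟩
    · rw [k2]; exact Submodule.smul_mem _ _ (hb w)
    · rw [k1]; exact Submodule.zero_mem _
    · exact wordSpan_letter V'.ρ (zS m n) _ (emb c, z0) ⟨c, rfl⟩ _ (hb w)
    · rw [← sub_add_cancel (V'.ρ (gen pI (emb c) (emb d)) (ψ w))
        ((if c = d then (-1 : ℂ) ^ (pI c) * r else 0) • ψ w), ← h2]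
      exact Submodule.add_mem _ (hb _) (Submodule.smul_mem _ _ (hb w))
  rw [eq_top_iff, ← htop]
  exact hle

lemma aTD_hw (a : ℂ) (i : Ind (m+1) n) (d : Ind m n) :
    aTD a i (emb d) (amono (hwMon m n)) = 0 := by
  rw [aTD, Module.End.mul_apply]
  rcases d with d | d
  · simp [aParB_inl, aParE, mkOp_amono, hwMon]
  · simp [aParB_inr, aParO, mkOp_amono, hwMon]

lemma hw_ten {L : Type} [AddCommGroup L] [Module ℂ L]
    (ρ : UEA (Ind m n) pI →ₐ[ℂ] Module.End ℂ L)
    (Θ : UEA (Ind (m+1) n) pI →ₐ[ℂ] Module.End ℂ (FaSp m n ⊗[ℂ] L))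
    (hΘ : IsTensorRep a r ρ Θ) (c d : Ind m n) (w : L) :
    Θ (gen pI (emb c) (emb d)) (amono (hwMon m n) ⊗ₜ[ℂ] w) =
      amono (hwMon m n) ⊗ₜ[ℂ] (ρ (gen pI c d) w + (if c = d then (-1 : ℂ) ^ (pI c) * r else 0) • w)
      := by
  have e2 : ((-1 : ℂ) ^ (pI c * pI c)) = (-1) ^ pI c := by
    rcases c with c | c <;> simp [pI]
  rw [hΘ.1, aTD_hw, TensorProduct.zero_tmul, zero_add, TensorProduct.tmul_add]
  congr 1
  · simp [parM, hwMon, cntA]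
  · split_ifs with h
    · rw [← h, e2, TensorProduct.tmul_smul]
    · simp

lemma kx_hw (c : Ind m n) : kx (hwMon m n) c = 0 := by
  rcases c with c | c <;> simp [kx, hwMon]

lemma fin_fib (k : ℕ) : {q : FaMon m n × List (lowS m n) |
    (∑ c, (rkI c + 1) * kx q.1 c) + htW q.2 = k}.Finite := by
  have h1 : (Set.Iic (fun _ : Fin m => k)).Finite := Set.finite_Iic _
  have h2 : (Set.univ : Set (Fin n → Bool)).Finite := Set.finite_univ
  have h3 : {l : List (lowS m n) | l.length ≤ k}.Finite := List.finite_length_le _ _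
  refine ((h1.prod h2).prod h3).subset ?_
  rintro ⟨⟨e, b⟩, l⟩ hq
  have hq' : (∑ c, (rkI c + 1) * kx (e, b) c) + htW l = k := hq
  refine ⟨⟨fun i => ?_, trivial⟩, ?_⟩
  · have := Finset.single_le_sum (f := fun c => (rkI c + 1) * kx (e, b) c)
      (fun c _ => Nat.zero_le _) (Finset.mem_univ (Sum.inl i : Ind m n))
    have h4 : e i ≤ (rkI (Sum.inl i : Ind m n) + 1) * kx (e, b) (Sum.inl i) :=
      Nat.le_mul_of_pos_left _ (Nat.succ_pos _)
    change e i ≤ k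
    have h5 : (rkI (Sum.inl i : Ind m n) + 1) * kx (e, b) (Sum.inl i) ≤
        ∑ c, (rkI c + 1) * kx (e, b) c := this
    omega
  · have := len_le_ht l
    change l.length ≤ k
    omega

end final
/-- Corollary 4.5.  If `λ` is a typical antidominant `gl(m|n)`-weight with
`λ_i − (−1)^{|i|}a ∉ ℤ` for all `i ∈ I` (i.e. `λ ∈ AW_{m|n}(a)`), then `F_a ⊗ M(λ)` is
isomorphic, as a `gl(m+1|n)`-representation, to the Verma module `M(λ̃)`. -/
theorem stmt9 (m n : ℕ) (a r : ℂ) (lam : Ind m n → ℂ)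
    (had : Antidom lam) (hty : Typical lam)
    (hint : ∀ i : Ind m n, ¬∃ z : ℤ, lam i - ((-1 : ℂ) ^ (pI i)) * a = (z : ℂ))
    (V : VermaM m n lam) (V' : VermaM (m+1) n (lamTilde a r lam))
    (Θ : UEA (Ind (m+1) n) pI →ₐ[ℂ] Module.End ℂ (FaSp m n ⊗[ℂ] V.L))
    (hΘ : IsTensorRep a r V.ρ Θ) :
    ∃ g : (FaSp m n ⊗[ℂ] V.L) ≃ₗ[ℂ] V'.L,
      ∀ (u : UEA (Ind (m+1) n) pI) (x : FaSp m n ⊗[ℂ] V.L),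
        g (Θ u x) = V'.ρ u (g x) := by

  obtain ⟨ψ, h1, h2⟩ := exists_psi V V'
  have hσs := LinearMap.range_eq_top.1 (sigma_surj V V' ψ h1 h2)
  obtain ⟨f, hf1, hf2⟩ := V'.univ (FaSp m n ⊗[ℂ] V.L) Θ (amono (hwMon m n) ⊗ₜ[ℂ] V.v)
    (by
      intro i j hij
      rcases ind_cases j with rfl | ⟨d, rfl⟩
      · rw [ilt_iff, rk_z0] at hij; omega
      rcases ind_cases i with rfl | ⟨c, rfl⟩
      · rw [hΘ.2.2.1, aTD_hw, TensorProduct.zero_tmul]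
      · rw [ilt_iff, rk_emb, rk_emb] at hij
        have hne : c ≠ d := by rintro rfl; exact lt_irrefl _ hij
        rw [hw_ten V.ρ Θ hΘ, V.hw c d ((ilt_iff _ _).2 (by omega)), if_neg hne]
        simp)
    (by
      intro i
      rcases ind_cases i with rfl | ⟨c, rfl⟩
      · rw [hΘ.2.2.2, aTD, aDivB_z0, aParB_z0, one_mul, aPar0_mono, ← TensorProduct.smul_tmul',
          ← add_smul]
        congr 1
        simp [degM, hwMon, cntA, lamTilde, z0]
      · rw [hw_ten V.ρ Θ hΘ, V.hwt, if_pos rfl, ← add_smul, TensorProduct.tmul_smul, lam_emb])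
  have hfψ : ∀ w, f (ψ w) = amono (hwMon m n) ⊗ₜ[ℂ] w := by
    let P : Submodule ℂ V.L :=
      LinearMap.eqLocus (f.comp ψ) (TensorProduct.mk ℂ (FaSp m n) V.L (amono (hwMon m n)))
    refine verma_ind V P ?_ ?_
    · change f (ψ V.v) = amono (hwMon m n) ⊗ₜ[ℂ] V.v
      rw [h1, hf1]
    · intro c d w hw
      have hw' : f (ψ w) = amono (hwMon m n) ⊗ₜ[ℂ] w := hw
      change f (ψ (V.ρ (gen pI c d) w)) = amono (hwMon m n) ⊗ₜ[ℂ] (V.ρ (gen pI c d) w)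
      rw [h2, map_sub, map_smul, hf2, hw', hw_ten V.ρ Θ hΘ, TensorProduct.tmul_add,
        TensorProduct.tmul_smul]
      exact add_sub_cancel_right (G := FaSp m n ⊗[ℂ] V.L) _ _
  have hfs : LinearMap.range f = ⊤ := by
    refine all_mem V Θ hΘ _ ?_ hint ⟨V'.v, hf1⟩
    rintro u _ ⟨y, rfl⟩
    exact ⟨V'.ρ u y, hf2 u y⟩
  have hfs' := LinearMap.range_eq_top.1 hfs
  have hΦ : ∀ x w, (f.comp (sigma V V' ψ)) (amono x ⊗ₜ[ℂ] w) =
      Θ (Ex x) (amono (hwMon m n) ⊗ₜ[ℂ] w) := by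
    intro x w
    rw [LinearMap.comp_apply, sigma_apply, hf2, hfψ]
  have hinj : Function.Injective (f.comp (sigma V V' ψ)) := by
    refine inj_of_surj_graded (X := FaSp m n ⊗[ℂ] V.L) (κ := FaMon m n × List (lowS m n))
      (Θ (Hh pI hI)) (f.comp (sigma V V' ψ))
      (fun q => amono q.1 ⊗ₜ[ℂ] wordAct V.ρ (lowS m n) q.2 V.v) ?_
      (fun q => (∑ c, (rkI c + 1) * kx q.1 c) + htW q.2)
      ((∑ c : Ind m n, hI (emb c) * ((-1) ^ (pI c * pI c) * r)) + ∑ c, hI (emb c) * lam c)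
      ?_ ?_ fin_fib ?_
    · refine tens_ind _ _ (verma_span V) ?_
      rintro x _ ⟨l, _, rfl, rfl⟩
      exact Submodule.subset_span ⟨(x, l), rfl⟩
    · rintro ⟨x, l⟩
      refine (tensor_wt V Θ hΘ x _ _ (word_wt V l)).trans ?_
      congr 1
      push_cast
      ring
    · rintro ⟨x, l⟩
      change Θ (Hh pI hI) ((f.comp (sigma V V' ψ)) (amono x ⊗ₜ[ℂ] _)) =
        _ • (f.comp (sigma V V' ψ)) (amono x ⊗ₜ[ℂ] _)
      rw [hΦ]
      refine (wt_apply (L := FaSp m n ⊗[ℂ] V.L) Θ (Ex_wt x) (tensor_wt V Θ hΘ _ _ _ (word_wt V l))).trans ?_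
      congr 1
      simp only [kx_hw, mul_zero, Finset.sum_const_zero]
      push_cast
      ring
    · rw [LinearMap.coe_comp]
      exact hfs'.comp hσs
  have hσi : Function.Injective (sigma V V' ψ) := by
    rw [LinearMap.coe_comp] at hinj
    exact hinj.of_comp
  have hfi : Function.Injective f := by
    intro y z hyz
    obtain ⟨y, rfl⟩ := hσs y
    obtain ⟨z, rfl⟩ := hσs z
    rw [hinj hyz]
  have hb : Function.Bijective f := ⟨hfi, hfs'⟩
  let e := LinearEquiv.ofBijective f hb
  refine ⟨e.symm, fun u x => ?_⟩
  apply e.injective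
  refine (e.apply_symm_apply _).trans ?_
  change Θ u x = f (V'.ρ u (e.symm x))
  refine Eq.trans ?_ (hf2 u (e.symm x)).symm
  exact congrArg (Θ u) (e.apply_symm_apply x).symm
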